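/- Let q be an odd integer ≥ 3 with ω(q) = 1 (i.e., q is a prime power), and let r be the multiplicative order of 2 modulo q. If φ(q)/r is even, then the set E'(q) of semi-bad classes modulo q is itself a coherent set with exactly r elements. -/

import Mathlib

/-!
The unit group `(ℤ/qℤ)ˣ` is cyclic, because `q` is an odd prime power, and the bad classes form
its subgroup `H = ⟨2⟩`, of order `r` and index `φ(q)/r`. When this index is even, the cyclic
quotient by `H` has exactly one element of order two, so the semi-bad classes, which are the
elements of order two modulo `H`, form a single coset of `H` (`exists_coset_of_even_index`).
A coset has `r` elements, and the product of two elements of a coset of order two lies in `H`.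
-/

/-- The set `E(q)` of bad classes: the powers `2^i`, `0 ≤ i ≤ r - 1`, in `ℤ/qℤ`,
where `r` is the multiplicative order of `2` modulo `q`. -/
def badE (q : ℕ) : Set (ZMod q) := {x | ∃ i < orderOf (2 : ZMod q), x = 2 ^ i}

/-- A class of `(ℤ/qℤ)*` is semi-bad if it does not belong to `E(q)` but its square does. -/
def SemiBad (q : ℕ) (x : ZMod q) : Prop := IsUnit x ∧ x ∉ badE q ∧ x ^ 2 ∈ badE q

/-- The set `E'(q)` of semi-bad classes. -/
def semiBadE (q : ℕ) : Set (ZMod q) := {x | SemiBad q x}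

/-- A set of semi-bad classes is coherent if it is nonempty and the product of any two of
its elements is a bad class. -/
def Coherent (q : ℕ) (C : Set (ZMod q)) : Prop :=
  C.Nonempty ∧ (∀ x ∈ C, SemiBad q x) ∧ ∀ x ∈ C, ∀ y ∈ C, x * y ∈ badE q

/-- In a cyclic group modulo a subgroup of even index there is exactly one element of order two;
here `t` represents its inverse. -/
lemma exists_coset_of_even_index {G : Type*} [CommGroup G] [Finite G] [IsCyclic G]
    (H : Subgroup G) (hH : Even H.index) :
    ∃ t : G, ∀ x : G, (x ∉ H ∧ x ^ 2 ∈ H) ↔ t * x ∈ H := by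
  obtain ⟨g, hg⟩ := IsCyclic.exists_generator (α := G)
  obtain ⟨k, hk⟩ := hH
  have hpos : H.index ≠ 0 := Subgroup.index_ne_zero_of_finite
  have hord : orderOf (g : G ⧸ H) = H.index := by
    rw [Subgroup.index]
    apply orderOf_eq_card_of_forall_mem_zpowers
    intro y
    induction y using QuotientGroup.induction_on with
    | H z =>
      obtain ⟨n, rfl⟩ := Subgroup.mem_zpowers_iff.mp (hg z)
      exact Subgroup.mem_zpowers_iff.mpr ⟨n, rfl⟩
  have mem_iff (n : ℤ) : g ^ n ∈ H ↔ (2 * k : ℤ) ∣ n := by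
    rw [← QuotientGroup.eq_one_iff, QuotientGroup.mk_zpow, ← orderOf_dvd_iff_zpow_eq_one, hord, hk]
    push_cast
    rw [two_mul]
  have hk0 : (k : ℤ) ≠ 0 := by omega
  refine ⟨g ^ (k : ℤ), fun x => ?_⟩
  obtain ⟨n, rfl⟩ := Subgroup.mem_zpowers_iff.mp (hg x)
  rw [← zpow_add, ← zpow_natCast, ← zpow_mul, mem_iff, mem_iff, mem_iff]
  constructor
  · rintro ⟨h1, j, hj⟩
    have hn : n = k * j := by push_cast at hj; linarith
    rcases Int.even_or_odd' j with ⟨c, rfl | rfl⟩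
    · exact absurd ⟨c, by rw [hn]; ring⟩ h1
    · exact ⟨c + 1, by rw [hn]; ring⟩
  · rintro ⟨j, hj⟩
    have hn : n = k * (2 * j - 1) := by linarith
    refine ⟨?_, 2 * j - 1, by rw [hn]; push_cast; ring⟩
    rintro ⟨c, hc⟩
    have : (k : ℤ) * (2 * j - 1) = k * (2 * c) := by rw [← hn, hc]; ring
    have := mul_left_cancel₀ hk0 this
    omega

/-- If `q` is an odd prime power (`ω(q) = 1`) and `φ(q)/r` is even, where `r` is the
multiplicative order of `2` modulo `q`, then `E'(q)` is itself a coherent set with exactly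
`r` elements. -/
theorem stmt8 (q : ℕ) (hq : 3 ≤ q) (hodd : Odd q)
    (homega : q.primeFactors.card = 1)
    (hparity : Even (q.totient / orderOf (2 : ZMod q))) :
    Coherent q (semiBadE q) ∧ (semiBadE q).ncard = orderOf (2 : ZMod q) := by
  have : NeZero q := ⟨by omega⟩
  have hcyc : IsCyclic (ZMod q)ˣ := by
    obtain ⟨p, n, hp, -, rfl⟩ := (isPrimePow_nat_iff q).mp
      (isPrimePow_iff_card_primeFactors_eq_one.mpr homega)
    refine ZMod.isCyclic_units_of_prime_pow p hp ?_ n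
    rintro rfl
    have hn : n ≠ 0 := by rintro rfl; omega
    exact Nat.not_even_iff_odd.mpr hodd ((Nat.even_pow.mpr ⟨even_two, hn⟩))
  set u : (ZMod q)ˣ := ZMod.unitOfCoprime 2 hodd.coprime_two_left with hu
  have hu2 : (u : ZMod q) = 2 := by simp [hu]
  have hr : orderOf (2 : ZMod q) = orderOf u := by rw [← hu2, orderOf_units]
  set H := Subgroup.zpowers u with hHdef
  have hcard : Nat.card H = orderOf (2 : ZMod q) := by rw [hr]; exact Nat.card_zpowers u
  have hindex : Even H.index := by
    have h := H.card_mul_index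
    rw [Nat.card_eq_fintype_card (α := (ZMod q)ˣ), ZMod.card_units_eq_totient, hcard] at h
    have hrpos : 0 < orderOf (2 : ZMod q) := hr ▸ orderOf_pos u
    rwa [← h, Nat.mul_div_cancel_left _ hrpos] at hparity
  have hbad (x : (ZMod q)ˣ) : (x : ZMod q) ∈ badE q ↔ x ∈ H := by
    classical
    rw [hHdef, mem_zpowers_iff_mem_range_orderOf, Finset.mem_image]
    simp only [badE, Set.mem_ofPred_eq, Finset.mem_range, ← hu2, orderOf_units, ← Units.val_pow_eq_pow_val,
      Units.val_inj, eq_comm (a := x)]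
  obtain ⟨t, ht⟩ := exists_coset_of_even_index H hindex
  have hsemi (x : (ZMod q)ˣ) : SemiBad q (x : ZMod q) ↔ t * x ∈ H := by
    rw [← ht, SemiBad, hbad, ← Units.val_pow_eq_pow_val, hbad]
    exact and_iff_right x.isUnit
  have htinv : t * t⁻¹ ∈ H := by rw [mul_inv_cancel]; exact H.one_mem
  refine ⟨⟨⟨_, (hsemi t⁻¹).mpr htinv⟩, fun _ hx => hx, ?_⟩, ?_⟩
  · rintro _ hx _ hy
    obtain ⟨x, rfl⟩ := hx.1
    obtain ⟨y, rfl⟩ := hy.1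
    rw [← Units.val_mul, hbad]
    have h := H.mul_mem (H.mul_mem ((hsemi x).mp hx) ((hsemi y).mp hy)) ((ht t⁻¹).mpr htinv).2
    have e : t * x * (t * y) * t⁻¹ ^ 2 = x * y := by
      rw [mul_mul_mul_comm, ← sq, inv_pow, mul_right_comm, mul_inv_cancel, one_mul]
    rwa [e] at h
  · have himage : semiBadE q = (fun h : (ZMod q)ˣ => ((t⁻¹ * h : (ZMod q)ˣ) : ZMod q)) '' H := by
      ext x
      constructor
      · intro hx
        obtain ⟨x, rfl⟩ := hx.1
        exact ⟨t * x, (hsemi x).mp hx, by simp⟩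
      · rintro ⟨h, hh, rfl⟩
        exact (hsemi _).mpr (by simpa using hh)
    have hinj : Function.Injective (fun h : (ZMod q)ˣ => ((t⁻¹ * h : (ZMod q)ˣ) : ZMod q)) :=
      Units.val_injective.comp (mul_right_injective t⁻¹)
    rw [himage, Set.ncard_image_of_injective _ hinj,
      ← hcard, ← Nat.card_coe_set_eq]
    rfl
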